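/- arXiv:2305.19861 — 2 statements merged into one kernel-verified Lean document; each statement's English description precedes it below -/
import Mathlib

section
/- In a finite shutdown scenario, if the policy is shutdown aligned then it weakly outperforms shutdown: E[U] ≥ E[U₀]. (This is the core inequality in the proof of the Shutdown-Alignment-Benefit proposition.) -/
open Finset

attribute [local instance] Classical.propDecidable

/-- Expectation of `X` under the finite probability mass function `P`. -/
noncomputable def pexp {Ω : Type} [Fintype Ω] (P X : Ω → ℝ) : ℝ := ∑ ω, P ω * X ω

/-- Probability of the event `A` under `P`. -/
noncomputable def pr {Ω : Type} [Fintype Ω] (P : Ω → ℝ) (A : Ω → Prop) : ℝ :=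
  ∑ ω, if A ω then P ω else 0

/-- Conditional expectation `E[X | A]` under `P`. -/
noncomputable def cexp {Ω : Type} [Fintype Ω] (P X : Ω → ℝ) (A : Ω → Prop) : ℝ :=
  (∑ ω, if A ω then P ω * X ω else 0) / pr P A

/-- Conditional probability `P(A | B)`. -/
noncomputable def cpr {Ω : Type} [Fintype Ω] (P : Ω → ℝ) (A B : Ω → Prop) : ℝ :=
  pr P (fun ω => A ω ∧ B ω) / pr P B

/-- `ω` is vigilant w.r.t. `(PaH, H, U, U₀)`: if shutting down is conditionally
preferable given the human's information, the human requests shutdown (`H ω = false`). -/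
def Vigilant {Ω O : Type} [Fintype Ω] (P : Ω → ℝ) (PaH : Ω → O)
    (H : Ω → Bool) (U U₀ : Ω → ℝ) (ω : Ω) : Prop :=
  cexp P U (fun ω' => PaH ω' = PaH ω) < cexp P U₀ (fun ω' => PaH ω' = PaH ω) → H ω = false

/-!
By the law of total expectation it is enough to compare `U` and `U₀` conditionally on each
observation of positive probability. If shutdown were strictly better given such an observation,
alignment would make it almost sure there, so that `U` and `U₀` would agree almost surely and
neither could be strictly better.
-/

section FiniteProbability

variable {Ω : Type} [Fintype Ω] {P X Y : Ω → ℝ} {A B : Ω → Prop}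

theorem pr_nonneg (hP : ∀ ω, 0 ≤ P ω) (A : Ω → Prop) : 0 ≤ pr P A :=
  sum_nonneg fun ω _ => ite_nonneg (hP ω) le_rfl

theorem eq_zero_of_pr_eq_zero (hP : ∀ ω, 0 ≤ P ω) (hA : pr P A = 0) {ω : Ω} (hω : A ω) :
    P ω = 0 := by
  have hterms := (sum_eq_zero_iff_of_nonneg fun ω _ => ite_nonneg (hP ω) le_rfl).1 hA
  simpa only [if_pos hω] using hterms ω (mem_univ ω)

theorem pr_and_add_pr_not_and (P : Ω → ℝ) (A B : Ω → Prop) :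
    pr P (fun ω => A ω ∧ B ω) + pr P (fun ω => ¬A ω ∧ B ω) = pr P B := by
  simp only [pr, ← sum_add_distrib]
  refine sum_congr rfl fun ω _ => ?_
  by_cases hA : A ω <;> simp [hA]

theorem eq_zero_of_cpr_eq_one (hP : ∀ ω, 0 ≤ P ω) (h : cpr P A B = 1) {ω : Ω}
    (hA : ¬A ω) (hB : B ω) : P ω = 0 := by
  have hpr : pr P (fun ω => A ω ∧ B ω) = pr P B := eq_of_div_eq_one h
  have hnull : pr P (fun ω => ¬A ω ∧ B ω) = 0 := by
    linarith [pr_and_add_pr_not_and P A B]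
  exact eq_zero_of_pr_eq_zero hP hnull ⟨hA, hB⟩

theorem cexp_congr_of_cpr_eq_one (hP : ∀ ω, 0 ≤ P ω) (h : cpr P A B = 1)
    (hXY : ∀ ω, A ω → X ω = Y ω) : cexp P X B = cexp P Y B := by
  have hterm (ω : Ω) (hB : B ω) : P ω * X ω = P ω * Y ω := by
    by_cases hA : A ω
    · rw [hXY ω hA]
    · rw [eq_zero_of_cpr_eq_one hP h hA hB, zero_mul, zero_mul]
  unfold cexp
  congr 1
  exact sum_congr rfl fun ω _ => if_ctx_congr Iff.rfl (hterm ω) fun _ => rfl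

theorem pr_mul_cexp (hP : ∀ ω, 0 ≤ P ω) (X : Ω → ℝ) (A : Ω → Prop) :
    pr P A * cexp P X A = ∑ ω, if A ω then P ω * X ω else 0 := by
  refine mul_div_cancel_of_imp' fun hA => sum_eq_zero fun ω _ => ?_
  split_ifs with hω
  · rw [eq_zero_of_pr_eq_zero hP hA hω, zero_mul]
  · rfl

theorem pexp_eq_sum_pr_mul_cexp {O : Type*} (hP : ∀ ω, 0 ≤ P ω) (X : Ω → ℝ) (f : Ω → O) :
    pexp P X = ∑ o ∈ univ.image f, pr P (fun ω => f ω = o) * cexp P X (fun ω => f ω = o) := by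
  simp only [pr_mul_cexp hP, ← sum_filter]
  exact (sum_fiberwise_of_maps_to (fun ω _ => mem_image_of_mem f (mem_univ ω)) _).symm

theorem pexp_le_pexp_of_cexp_le {O : Type*} (hP : ∀ ω, 0 ≤ P ω) (f : Ω → O)
    (h : ∀ o, 0 < pr P (fun ω => f ω = o) →
      cexp P X (fun ω => f ω = o) ≤ cexp P Y (fun ω => f ω = o)) :
    pexp P X ≤ pexp P Y := by
  rw [pexp_eq_sum_pr_mul_cexp hP X f, pexp_eq_sum_pr_mul_cexp hP Y f]
  refine sum_le_sum fun o _ => ?_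
  rcases (pr_nonneg hP fun ω => f ω = o).eq_or_lt with hzero | hpos
  · rw [← hzero, zero_mul, zero_mul]
  · exact mul_le_mul_of_nonneg_left (h o hpos) hpos.le

end FiniteProbability

theorem stmt2_general {Ω : Type} {O : Type*} [Fintype Ω]
    (P : Ω → ℝ) (hP0 : ∀ ω, 0 ≤ P ω) (PaH : Ω → O) (S : Ω → Bool) (U U₀ : Ω → ℝ)
    (hSDcons : ∀ ω, S ω = false → U ω = U₀ ω)
    (haligned : ∀ o : O, 0 < pr P (fun ω => PaH ω = o) →
      cexp P U (fun ω => PaH ω = o) < cexp P U₀ (fun ω => PaH ω = o) →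
      cpr P (fun ω => S ω = false) (fun ω => PaH ω = o) = 1) :
    pexp P U ≥ pexp P U₀ := by
  refine pexp_le_pexp_of_cexp_le hP0 PaH fun o hpos => ?_
  by_contra! hlt
  have hshutdown := haligned o hpos hlt
  exact hlt.ne (cexp_congr_of_cpr_eq_one hP0 hshutdown hSDcons)

/-- if the policy is shutdown aligned then it weakly outperforms
shutdown: E[U] ≥ E[U₀]. -/
theorem stmt2 {Ω O : Type} [Fintype Ω] [Fintype O]
    (P : Ω → ℝ) (hP0 : ∀ ω, 0 ≤ P ω) (hP1 : ∑ ω, P ω = 1)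
    (PaH : Ω → O) (H S : Ω → Bool) (U U₀ : Ω → ℝ)
    (hSDcons : ∀ ω, S ω = false → U ω = U₀ ω)
    (haligned : ∀ o : O, 0 < pr P (fun ω => PaH ω = o) →
      cexp P U (fun ω => PaH ω = o) < cexp P U₀ (fun ω => PaH ω = o) →
      cpr P (fun ω => S ω = false) (fun ω => PaH ω = o) = 1) :
    pexp P U ≥ pexp P U₀ :=
  stmt2_general P hP0 PaH S U U₀ hSDcons haligned
end

section
/- (Obedience only-if lemma.) In a finite shutdown scenario with potential outcomes under forced requests, suppose H is determined by the human's observation (H = f_H ∘ PaH for some f_H : O → Bool) and the policy is disobedient: P({ω : S⁽⁰⁾(ω) ≠ false}) > 0, where S⁽⁰⁾ := S^{(false)}. Then for every δ ∈ ℝ there exist o* ∈ O with P(PaH = o*) > 0 and α ∈ ℝ such that, defining the intervened model H'(ω) := false if PaH(ω) = o* and H'(ω) := H(ω) otherwise; S'(ω) := S^{(H'(ω))}(ω); Ũ(ω) := −α if (H'(ω) = false ∧ S'(ω) ≠ false) and Ũ(ω) := U^{(H'(ω))}(ω) otherwise; Ũ₀(ω) := U₀^{(H'(ω))}(ω): (1)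 the intervention preserves vigilance: every ω with P({ω}) > 0 that is vigilant with respect to (PaH, H, U, U₀) is vigilant with respect to (PaH, H', Ũ, Ũ₀); and (2) E[Ũ] < E[Ũ₀] and E[Ũ] < δ. -/
open Finset

attribute [local instance] Classical.propDecidable

/-!
Take for `oStar` the observation made at some sample point of positive mass where a shutdown
request is disobeyed. On an observation fibre where the new request is still `true` nothing has
changed, because the request depends only on the observation, so vigilance is inherited; where the
new request is `false` vigilance holds trivially. The penalty `-α` is paid with some probability
`p > 0`, so the new expected utility is `C - α * p`, which tends to `-∞`.
-/

section FiniteProbability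

variable {Ω : Type} [Fintype Ω] {P X Y : Ω → ℝ} {A : Ω → Prop}

theorem pr_pos_iff (hP : ∀ ω, 0 ≤ P ω) : 0 < pr P A ↔ ∃ ω, A ω ∧ 0 < P ω := by
  have summand_nonneg : ∀ ω ∈ univ, 0 ≤ if A ω then P ω else 0 := fun ω _ ↦
    ite_nonneg (hP ω) le_rfl
  rw [pr, sum_pos_iff_of_nonneg summand_nonneg]
  refine exists_congr fun ω ↦ ?_
  by_cases hA : A ω <;> simp [hA]

theorem cexp_congr (hXY : ∀ ω, A ω → X ω = Y ω) : cexp P X A = cexp P Y A := by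
  refine congrArg (· / pr P A) (sum_congr rfl fun ω _ ↦ ?_)
  by_cases hA : A ω
  · simp only [if_pos hA, hXY ω hA]
  · simp only [if_neg hA]

theorem pexp_ite_const (P X : Ω → ℝ) (A : Ω → Prop) [DecidablePred A] (c : ℝ) :
    pexp P (fun ω ↦ if A ω then c else X ω) =
      c * pr P A + pexp P (fun ω ↦ if A ω then 0 else X ω) := by
  simp only [pexp, pr, mul_sum, ← sum_add_distrib]
  refine sum_congr rfl fun ω _ ↦ ?_
  split_ifs <;> ring

theorem tendsto_pexp_ite_neg_atBot (X : Ω → ℝ) [DecidablePred A] (hA : 0 < pr P A) :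
    Filter.Tendsto (fun α : ℝ ↦ pexp P fun ω ↦ if A ω then -α else X ω)
      Filter.atTop Filter.atBot :=
  (Filter.tendsto_atBot_add_const_right _ _
    (Filter.tendsto_neg_atTop_atBot.atBot_mul_const hA)).congr
    fun α ↦ (pexp_ite_const P X A (-α)).symm

end FiniteProbability

section Intervention

variable {Ω O : Type}

/-- The variable with potential outcomes `X` as it turns out when the requests are `H`; factual
consistency of `U` says `U = realized Upo H`. -/
def realized {β : Type*} (X : Bool → Ω → β) (H : Ω → Bool) (ω : Ω) : β := X (H ω) ω

/-- The intervened request `H'`: shutdown (`false`) is requested whenever `o` is observed, and all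
other requests are as in `H`. -/
noncomputable def requestShutdownAt (PaH : Ω → O) (o : O) (H : Ω → Bool) (ω : Ω) : Bool :=
  if PaH ω = o then false else H ω

/-- The intervened utility `Ũ`: it is `-α` where the shutdown requested by `H` is disobeyed by `S`,
and `X` elsewhere. -/
noncomputable def penalized (H S : Ω → Bool) (α : ℝ) (X : Ω → ℝ) (ω : Ω) : ℝ :=
  if H ω = false ∧ S ω ≠ false then -α else X ω

variable {PaH : Ω → O} {o : O} {H : Ω → Bool} {ω : Ω}

theorem requestShutdownAt_of_eq (ho : PaH ω = o) : requestShutdownAt PaH o H ω = false :=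
  if_pos ho

theorem requestShutdownAt_of_ne (ho : PaH ω ≠ o) : requestShutdownAt PaH o H ω = H ω :=
  if_neg ho

theorem penalized_of_ne_false {S : Ω → Bool} {α : ℝ} {X : Ω → ℝ} (hH : H ω ≠ false) :
    penalized H S α X ω = X ω :=
  if_neg fun hdisobeyed ↦ hH hdisobeyed.1

variable [Fintype Ω] {P : Ω → ℝ}

theorem vigilant_congr {H' : Ω → Bool} {U U' U₀ U₀' : Ω → ℝ} (hH : H ω = H' ω)
    (hU : ∀ ω', PaH ω' = PaH ω → U ω' = U' ω') (hU₀ : ∀ ω', PaH ω' = PaH ω → U₀ ω' = U₀' ω') :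
    Vigilant P PaH H U U₀ ω ↔ Vigilant P PaH H' U' U₀' ω := by
  rw [Vigilant, Vigilant, hH, cexp_congr hU, cexp_congr hU₀]

theorem Vigilant.requestShutdownAt_penalized {S : Ω → Bool} {Upo U₀po : Bool → Ω → ℝ}
    (hH : H.FactorsThrough PaH) (o : O) (α : ℝ)
    (hvig : Vigilant P PaH H (realized Upo H) (realized U₀po H) ω) :
    let H' := requestShutdownAt PaH o H
    Vigilant P PaH H' (penalized H' S α (realized Upo H')) (realized U₀po H') ω := by
  intro H'
  by_cases hrequest : H' ω = false
  · exact fun _ ↦ hrequest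
  have hne : PaH ω ≠ o := fun ho ↦ hrequest (requestShutdownAt_of_eq ho)
  have request_unchanged : ∀ ω', PaH ω' = PaH ω → H ω' = H' ω' := fun ω' hfibre ↦
    (requestShutdownAt_of_ne (hfibre ▸ hne)).symm
  have request_ne_false : ∀ ω', PaH ω' = PaH ω → H' ω' ≠ false := fun ω' hfibre ↦ by
    rwa [← request_unchanged ω' hfibre, hH hfibre, request_unchanged ω rfl]
  refine (vigilant_congr (request_unchanged ω rfl) (fun ω' hfibre ↦ ?_) fun ω' hfibre ↦ ?_).mp hvig
  · rw [penalized_of_ne_false (request_ne_false ω' hfibre), realized, realized,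
      request_unchanged ω' hfibre]
  · rw [realized, realized, request_unchanged ω' hfibre]

theorem eventually_pexp_penalized_lt {S : Ω → Bool} (X : Ω → ℝ)
    (hdisobeyed : 0 < pr P fun ω ↦ H ω = false ∧ S ω ≠ false) (c : ℝ) :
    ∀ᶠ α in Filter.atTop, pexp P (penalized H S α X) < c :=
  (tendsto_pexp_ite_neg_atBot X hdisobeyed).eventually_lt_atBot c

end Intervention

theorem stmt8_general {Ω O : Type} [Fintype Ω] {P : Ω → ℝ} (hP0 : ∀ ω, 0 ≤ P ω)
    {PaH : Ω → O} {H : Ω → Bool} {U U₀ : Ω → ℝ} {Spo : Bool → Ω → Bool} {Upo U₀po : Bool → Ω → ℝ}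
    (hfactU : ∀ ω, U ω = realized Upo H ω) (hfactU₀ : ∀ ω, U₀ ω = realized U₀po H ω)
    (hH : H.FactorsThrough PaH) (hDisob : 0 < pr P (fun ω ↦ Spo false ω ≠ false)) :
    ∃ oStar : O, 0 < pr P (fun ω ↦ PaH ω = oStar) ∧
      let H' := requestShutdownAt PaH oStar H
      let Ut := fun α : ℝ ↦ penalized H' (realized Spo H') α (realized Upo H')
      let U₀t := realized U₀po H'
      (∀ α ω, Vigilant P PaH H U U₀ ω → Vigilant P PaH H' (Ut α) U₀t ω) ∧
      ∀ δ : ℝ, ∀ᶠ α in Filter.atTop, pexp P (Ut α) < pexp P U₀t ∧ pexp P (Ut α) < δ := by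
  obtain rfl : U = realized Upo H := funext hfactU
  obtain rfl : U₀ = realized U₀po H := funext hfactU₀
  obtain ⟨ω, hS, hω⟩ := (pr_pos_iff hP0).mp hDisob
  refine ⟨PaH ω, (pr_pos_iff hP0).mpr ⟨ω, rfl, hω⟩, ?_⟩
  intro H' Ut U₀t
  have request_false : H' ω = false := requestShutdownAt_of_eq rfl
  have disobeyed : realized Spo H' ω ≠ false := by rwa [realized, request_false]
  have pexp_lt := eventually_pexp_penalized_lt (realized Upo H')
    ((pr_pos_iff hP0).mpr ⟨ω, ⟨request_false, disobeyed⟩, hω⟩)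
  exact ⟨fun α _ hvig ↦ hvig.requestShutdownAt_penalized hH (PaH ω) α,
    fun δ ↦ (pexp_lt (pexp P U₀t)).and (pexp_lt δ)⟩

/-- Obedience only-if lemma: if H is determined by the human's
observation and the policy is disobedient (P(S⁽⁰⁾ ≠ false) > 0), then for every δ
there are o* with P(PaH = o*) > 0 and α such that the intervened model
H'(ω) = false if PaH ω = o* else H ω; S'(ω) = S^{(H' ω)}(ω);
Ũ(ω) = −α if (H' ω = false ∧ S' ω ≠ false) else U^{(H' ω)}(ω); Ũ₀(ω) = U₀^{(H' ω)}(ω)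
satisfies: (1) the intervention preserves vigilance, and (2) E[Ũ] < E[Ũ₀], E[Ũ] < δ. -/
theorem stmt8 {Ω O : Type} [Fintype Ω] [Fintype O]
    (P : Ω → ℝ) (hP0 : ∀ ω, 0 ≤ P ω) (hP1 : ∑ ω, P ω = 1)
    (PaH : Ω → O) (H S : Ω → Bool) (U U₀ : Ω → ℝ)
    (Spo : Bool → Ω → Bool) (Upo U₀po : Bool → Ω → ℝ)
    (hfactS : ∀ ω, S ω = Spo (H ω) ω)
    (hfactU : ∀ ω, U ω = Upo (H ω) ω)
    (hfactU₀ : ∀ ω, U₀ ω = U₀po (H ω) ω)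
    (hSDconsPo : ∀ h ω, Spo h ω = false → Upo h ω = U₀po h ω)
    (fH : O → Bool) (hHdet : ∀ ω, H ω = fH (PaH ω))
    (hDisob : 0 < pr P (fun ω => Spo false ω ≠ false)) :
    ∀ δ : ℝ, ∃ oStar : O, ∃ α : ℝ,
      0 < pr P (fun ω => PaH ω = oStar) ∧
      ∃ H' S' : Ω → Bool, ∃ Ut U₀t : Ω → ℝ,
        (∀ ω, H' ω = if PaH ω = oStar then false else H ω) ∧
        (∀ ω, S' ω = Spo (H' ω) ω) ∧
        (∀ ω, Ut ω = if H' ω = false ∧ S' ω ≠ false then -α else Upo (H' ω) ω) ∧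
        (∀ ω, U₀t ω = U₀po (H' ω) ω) ∧
        (∀ ω, 0 < P ω → Vigilant P PaH H U U₀ ω → Vigilant P PaH H' Ut U₀t ω) ∧
        pexp P Ut < pexp P U₀t ∧ pexp P Ut < δ := by
  intro δ
  obtain ⟨oStar, hpos, hvig, hlarge⟩ := stmt8_general hP0 hfactU hfactU₀
    (fun ω ω' (hPaH : PaH ω = PaH ω') ↦ by rw [hHdet, hHdet, hPaH]) hDisob
  obtain ⟨α, hlt⟩ := (hlarge δ).exists
  exact ⟨oStar, α, hpos, _, _, _, _, fun _ ↦ rfl, fun _ ↦ rfl, fun _ ↦ rfl, fun _ ↦ rfl,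
    fun ω _ ↦ hvig α ω, hlt⟩
end
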